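/- The sum over isomorphism classes of finite abelian p-groups A of μ^0(A)/|A| equals 1 − 1/p; that is, ∑_A |Aut(A)|^{-1} · |A|^{-1} · ∏_{k=1}^∞ (1 − p^{-k}) = 1 − p^{-1}. (Equivalently: under the pointed Cohen–Lenstra measure μ, the probability that the marked element is the identity is 1 − p^{-1}.) -/

import Mathlib

/-!
Cohen–Lenstra moments: for every integer `u ≥ 0` and every finite abelian `p`-group `A`,
the sum over isomorphism classes of finite abelian `p`-groups `B` of `|Sur(B,A)| · μ^u(B)`
equals `|A|^{-u}`.
-/

open scoped Classical

/-- The number of surjective group homomorphisms `B → A`. -/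
noncomputable def numSur (B A : Type*) [AddCommGroup B] [AddCommGroup A] : ℕ :=
  Nat.card {f : B →+ A // Function.Surjective f}

/-- The number of automorphisms of `A`. -/
noncomputable def numAut (A : Type*) [AddCommGroup A] : ℕ :=
  Nat.card (A ≃+ A)

/-- The infinite product `∏_{k=1}^∞ (1 - p^{-(k+u)})`. -/
noncomputable def clProd (p u : ℕ) : ℝ :=
  ∏' k : ℕ, (1 - (p : ℝ) ^ (-((k : ℤ) + 1 + u)))

/-- The Cohen–Lenstra measure `μ^u(A) = |A|^{-u} |Aut(A)|^{-1} ∏_{k=1}^∞ (1 - p^{-(k+u)})`. -/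
noncomputable def clMeasure (p u : ℕ) (A : Type*) [AddCommGroup A] : ℝ :=
  ((Nat.card A : ℝ) ^ u)⁻¹ * ((numAut A : ℝ))⁻¹ * clProd p u

/-- The finite abelian `p`-group `G_λ = ⨁_i ℤ/p^{λ_i}ℤ` associated to a partition `λ`,
a finite multiset of positive integers. -/
def CLGroup (p : ℕ) (lam : Multiset ℕ+) : Type :=
  ∀ i : Fin lam.toList.length, ZMod (p ^ ((lam.toList.get i : ℕ+) : ℕ))

noncomputable instance (p : ℕ) (lam : Multiset ℕ+) : AddCommGroup (CLGroup p lam) := by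
  delta CLGroup; infer_instance

open scoped ENNReal

theorem idx_split {G : Type*} [AddCommGroup G] (L : AddSubgroup (G × ℤ)) :
    L.index = (L.comap (AddMonoidHom.inl G ℤ)).index * (L.map (AddMonoidHom.snd G ℤ)).index := by
  have hs : Function.Surjective (AddMonoidHom.snd G ℤ) := fun z => ⟨(0, z), rfl⟩
  have h1 := AddSubgroup.index_comap_of_surjective (L.map (AddMonoidHom.snd G ℤ)) hs
  rw [AddSubgroup.comap_map_eq] at h1
  have h2 := AddSubgroup.relIndex_mul_index
    (le_sup_left : L ≤ L ⊔ (AddMonoidHom.snd G ℤ).ker)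
  rw [← h2, h1, AddSubgroup.relIndex_sup_left, AddSubgroup.index_comap]
  congr 2
  ext ⟨a, b⟩
  rw [AddMonoidHom.mem_ker]
  simp [eq_comm]

/-- subgroups of `p`-power index -/
abbrev PSub (p : ℕ) (G : Type*) [AddCommGroup G] := {L : AddSubgroup G // ∃ n, L.index = p ^ n}

noncomputable def pzeta (p : ℕ) (G : Type*) [AddCommGroup G] (s : ℕ) : ℝ≥0∞ :=
  ∑' L : PSub p G, ((L.1.index : ℝ≥0∞)⁻¹) ^ s

theorem pzeta_congr (p : ℕ) {G H : Type*} [AddCommGroup G] [AddCommGroup H] (e : G ≃+ H) (s : ℕ) :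
    pzeta p G s = pzeta p H s := by
  unfold pzeta
  have hi : ∀ L : AddSubgroup G, (e.mapAddSubgroup L).index = L.index := fun L =>
    AddSubgroup.index_map_equiv L e
  let E : PSub p G ≃ PSub p H :=
    e.mapAddSubgroup.toEquiv.subtypeEquiv (fun L => by
      change _ ↔ ∃ n, (e.mapAddSubgroup L).index = p ^ n
      rw [hi])
  rw [← E.tsum_eq]
  congr 1 with L
  change _ = ((((e.mapAddSubgroup L.1).index : ℕ) : ℝ≥0∞)⁻¹) ^ s
  rw [hi]

/-- The subgroup of `G × ℤ` built from `L ≤ G`, `m`, and `g ∈ G`. -/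
def mkSub {G : Type*} [AddCommGroup G] (L : AddSubgroup G) (n : ℤ) (c : G ⧸ L) :
    AddSubgroup (G × ℤ) where
  carrier := {x | ∃ t : ℤ, x.2 = t * n ∧ (x.1 : G ⧸ L) = t • c}
  zero_mem' := ⟨0, by simp⟩
  add_mem' := by
    rintro x y ⟨t, h1, h2⟩ ⟨u, h3, h4⟩
    exact ⟨t + u, by simp [h1, h3, add_mul], by simp [h2, h4, add_smul]⟩
  neg_mem' := by
    rintro x ⟨t, h1, h2⟩
    exact ⟨-t, by simp [h1], by simp [h2]⟩

theorem mem_mkSub {G : Type*} [AddCommGroup G] {L : AddSubgroup G} {n : ℤ} {c : G ⧸ L} {x : G × ℤ} :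
    x ∈ mkSub L n c ↔ ∃ t : ℤ, x.2 = t * n ∧ (x.1 : G ⧸ L) = t • c := Iff.rfl

theorem mkSub_comap {G : Type*} [AddCommGroup G] (L : AddSubgroup G) {n : ℤ} (hn : n ≠ 0)
    (c : G ⧸ L) : (mkSub L n c).comap (AddMonoidHom.inl G ℤ) = L := by
  ext g
  rw [AddSubgroup.mem_comap, mem_mkSub]
  constructor
  · rintro ⟨t, h1, h2⟩
    have : t = 0 := by simpa [hn] using h1
    subst this
    simpa using h2
  · intro h
    exact ⟨0, by simp, by simpa using h⟩

theorem mkSub_map {G : Type*} [AddCommGroup G] (L : AddSubgroup G) (n : ℤ)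
    (c : G ⧸ L) : (mkSub L n c).map (AddMonoidHom.snd G ℤ) = AddSubgroup.zmultiples n := by
  ext z
  rw [AddSubgroup.mem_map, AddSubgroup.mem_zmultiples_iff]
  constructor
  · rintro ⟨x, ⟨t, h1, h2⟩, rfl⟩
    exact ⟨t, by simp [h1]⟩
  · rintro ⟨t, rfl⟩
    obtain ⟨g, rfl⟩ := QuotientAddGroup.mk_surjective c
    exact ⟨(t • g, t * n), ⟨t, rfl, by simp⟩, by simp⟩

theorem mkSub_index {G : Type*} [AddCommGroup G] (L : AddSubgroup G) {n : ℕ} (hn : n ≠ 0)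
    (c : G ⧸ L) : (mkSub L n c).index = L.index * n := by
  rw [idx_split, mkSub_comap L (by exact_mod_cast hn), mkSub_map, Int.index_zmultiples]
  simp

def mkP {p : ℕ} (hp : p.Prime) {G : Type*} [AddCommGroup G] 
    (x : Σ L : PSub p G, ℕ × (G ⧸ L.1)) : PSub p (G × ℤ) :=
  ⟨mkSub x.1.1 ((p ^ x.2.1 : ℕ) : ℤ) x.2.2, by
    obtain ⟨⟨L, n, hn⟩, m, c⟩ := x
    exact ⟨n + m, by rw [mkSub_index _ (pow_ne_zero _ hp.ne_zero)]; simp [hn, pow_add]⟩⟩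

theorem mkP_bij {p : ℕ} (hp : p.Prime) {G : Type*} [AddCommGroup G] :
    Function.Bijective (mkP hp (G := G)) := by
  have hne : ∀ m, ((p ^ m : ℕ) : ℤ) ≠ 0 := fun m => by
    exact_mod_cast pow_ne_zero _ hp.ne_zero
  constructor
  · rintro ⟨⟨L, hL⟩, m, c⟩ ⟨⟨L', hL'⟩, m', c'⟩ h
    have h : mkSub L ((p ^ m : ℕ) : ℤ) c = mkSub L' ((p ^ m' : ℕ) : ℤ) c' := congrArg Subtype.val h
    have e1 : L = L' := by rw [← mkSub_comap L (hne m) c, h, mkSub_comap L' (hne m')]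
    subst e1
    have e2 : m = m' := by
      have := congrArg AddSubgroup.index (mkSub_map L ((p ^ m : ℕ) : ℤ) c)
      rw [h, mkSub_map, Int.index_zmultiples, Int.index_zmultiples] at this
      simp only [Int.natAbs_natCast] at this
      exact (Nat.pow_right_injective hp.two_le this).symm
    subst e2
    have e3 : c = c' := by
      obtain ⟨g, rfl⟩ := QuotientAddGroup.mk_surjective c
      have : (g, ((p ^ m : ℕ) : ℤ)) ∈ mkSub L ((p ^ m : ℕ) : ℤ) (g : G ⧸ L) := ⟨1, by simp, by simp⟩
      rw [h] at this
      obtain ⟨t, h1, h2⟩ := this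
      have : t = 1 := by
        have h1 : ((p ^ m : ℕ) : ℤ) = t * ((p ^ m : ℕ) : ℤ) := h1
        exact (mul_right_cancel₀ (hne m) (by rw [one_mul]; exact h1)).symm
      subst this
      simpa using h2
    subst e3
    rfl
  · rintro ⟨L, N, hN⟩
    have hs := idx_split L
    rw [hN] at hs
    obtain ⟨a, -, ha⟩ := (Nat.dvd_prime_pow hp).1 (Dvd.intro _ hs.symm)
    obtain ⟨m, -, hm⟩ := (Nat.dvd_prime_pow hp).1 (Dvd.intro_left _ hs.symm)
    have hmap : L.map (AddMonoidHom.snd G ℤ) = AddSubgroup.zmultiples ((p ^ m : ℕ) : ℤ) := by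
      obtain ⟨z, hz⟩ := Int.subgroup_cyclic (L.map (AddMonoidHom.snd G ℤ))
      rw [← AddSubgroup.zmultiples_eq_closure] at hz
      rw [hz, Int.index_zmultiples] at hm
      rw [hz, ← hm]
      exact (Int.zmultiples_natAbs z).symm
    have : ((p ^ m : ℕ) : ℤ) ∈ L.map (AddMonoidHom.snd G ℤ) := by rw [hmap]; simp
    obtain ⟨⟨g, z⟩, hg, hz⟩ := this
    simp only [AddMonoidHom.coe_snd] at hz
    subst hz
    refine ⟨⟨⟨L.comap (AddMonoidHom.inl G ℤ), a, ha⟩, m, (g : G ⧸ _)⟩, ?_⟩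
    apply Subtype.ext
    ext ⟨x, y⟩
    change (x, y) ∈ mkSub _ _ _ ↔ _
    have key : ∀ t : ℤ, ((x : G ⧸ (L.comap (AddMonoidHom.inl G ℤ))) = t • (g : G ⧸ (L.comap (AddMonoidHom.inl G ℤ))))
        ↔ (x - t • g, (0:ℤ)) ∈ L := by
      intro t
      rw [← QuotientAddGroup.mk_zsmul, eq_comm, QuotientAddGroup.eq, AddSubgroup.mem_comap]
      simp [sub_eq_add_neg, add_comm]
    constructor
    · rintro ⟨t, h1, h2⟩
      rw [key] at h2
      have := L.add_mem h2 (L.zsmul_mem hg t)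
      simp at h1
      simpa [h1] using this
    · intro h
      have : y ∈ L.map (AddMonoidHom.snd G ℤ) := ⟨_, h, rfl⟩
      rw [hmap, AddSubgroup.mem_zmultiples_iff] at this
      obtain ⟨t, rfl⟩ := this
      refine ⟨t, by simp, (key t).2 ?_⟩
      have := L.sub_mem h (L.zsmul_mem hg t)
      simpa using this

theorem pzeta_step {p : ℕ} (hp : p.Prime) (G : Type*) [AddCommGroup G] (s : ℕ) :
    pzeta p (G × ℤ) (s + 1) = pzeta p G s * (1 - ((p : ℝ≥0∞)⁻¹) ^ (s+1))⁻¹ := by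
  unfold pzeta
  rw [← (Equiv.ofBijective _ (mkP_bij hp)).tsum_eq, ENNReal.tsum_sigma', ← ENNReal.tsum_mul_right]
  congr 1 with L
  have hcard : ∀ a : ℝ≥0∞, ∑' c : G ⧸ L.1, a = L.1.index * a := by
    intro a
    obtain ⟨n, hn⟩ := L.2
    have : Finite (G ⧸ L.1) := by
      have : L.1.FiniteIndex := ⟨by rw [hn]; exact pow_ne_zero _ hp.ne_zero⟩
      exact AddSubgroup.finite_quotient_of_finiteIndex
    have := Fintype.ofFinite (G ⧸ L.1)
    rw [tsum_fintype, Finset.sum_const, AddSubgroup.index, Nat.card_eq_fintype_card]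
    simp
  rw [ENNReal.tsum_prod', ← ENNReal.tsum_geometric, ← ENNReal.tsum_mul_left]
  congr 1 with m
  have : ∀ c : G ⧸ L.1, ((Equiv.ofBijective _ (mkP_bij hp)) ⟨L, (m, c)⟩).1.index = L.1.index * p ^ m := 
    fun c => mkSub_index _ (pow_ne_zero _ hp.ne_zero) c
  simp only [this]
  rw [hcard]
  have h0 : (L.1.index : ℝ≥0∞) ≠ 0 := by
    obtain ⟨n, hn⟩ := L.2
    rw [hn]; exact_mod_cast pow_ne_zero _ hp.ne_zero
  push_cast
  rw [ENNReal.mul_inv (by simp) (by simp), mul_pow, pow_succ (_ : ℝ≥0∞)⁻¹ s, ← pow_mul,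
    ENNReal.inv_pow (a := (p : ℝ≥0∞)), ← pow_mul (p : ℝ≥0∞)⁻¹ m, mul_comm m]
  rw [← mul_assoc, mul_comm (_ ^ s), ← mul_assoc, ENNReal.mul_inv_cancel h0 (by simp), one_mul]

theorem pzeta_zero {p : ℕ} (s : ℕ) : pzeta p (Fin 0 → ℤ) s = 1 := by
  unfold pzeta
  have : Unique (PSub p (Fin 0 → ℤ)) := { 
    default := ⟨⊤, 0, by simp⟩
    uniq := fun L => Subtype.ext (Subsingleton.elim _ _) }
  rw [tsum_fintype, Fintype.sum_unique]
  have : ∀ L : AddSubgroup (Fin 0 → ℤ), L.index = 1 := fun L => by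
    rw [Subsingleton.elim L ⊤, AddSubgroup.index_top]
  simp [this]

theorem pzeta_eq {p : ℕ} (hp : p.Prime) (k : ℕ) (s : ℕ) : pzeta p (Fin k → ℤ) (s + k) =
    ∏ j ∈ Finset.range k, (1 - ((p : ℝ≥0∞)⁻¹) ^ (s + j + 1))⁻¹ := by
  induction k with
  | zero => simp [pzeta_zero]
  | succ k ih =>
    rw [Finset.prod_range_succ, ← ih, ← add_assoc, ← pzeta_step hp]
    refine pzeta_congr p ?_ _
    exact { (Fin.snocEquiv (fun _ : Fin (k + 1) => ℤ)).symm.trans (Equiv.prodComm _ _) with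
      map_add' := fun x y => rfl }

theorem exists_reindex {α β γ : Type*} [Fintype α] [Fintype β] (f : α → γ) (g : β → γ)
    (h : (Finset.univ.val.map f) = (Finset.univ.val.map g)) :
    ∃ σ : α ≃ β, ∀ x, g (σ x) = f x := by
  have hc : ∀ c, Fintype.card {x // f x = c} = Fintype.card {x // g x = c} := by
    intro c
    have := congrArg (Multiset.count c) h
    rw [Multiset.count_map, Multiset.count_map] at this
    rw [Fintype.card_subtype, Fintype.card_subtype, Finset.card_def, Finset.card_def,
      Finset.filter_val, Finset.filter_val]
    simpa only [eq_comm] using this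
  exact ⟨Equiv.ofFiberEquiv (fun c => Fintype.equivOfCardEq (hc c)), fun x =>
    Equiv.ofFiberEquiv_map _ x⟩

theorem map_toList_get (lam : Multiset ℕ+) :
    (Finset.univ : Finset (Fin lam.toList.length)).val.map lam.toList.get = lam := by
  rw [Fin.univ_val_map, List.ofFn_get, Multiset.coe_toList]

theorem CLGroup_exists {p : ℕ} (hp : p.Prime) (G : Type*) [AddCommGroup G] [Finite G] {N : ℕ}
    (hN : Nat.card G = p ^ N) : ∃ lam, Nonempty (G ≃+ CLGroup p lam) := by
  obtain ⟨ι, _, n, hn, ⟨e⟩⟩ := AddCommGroup.equiv_directSum_zmod_of_finite' G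
  let e' := e.trans (DirectSum.addEquivProd _)
  have hcard : ∏ i, n i = p ^ N := by
    rw [← hN, Nat.card_congr e'.toEquiv, Nat.card_pi]
    simp
  have : ∀ i, ∃ m : ℕ+, n i = p ^ (m : ℕ) := by
    intro i
    have : n i ∣ p ^ N := hcard ▸ Finset.dvd_prod_of_mem _ (Finset.mem_univ i)
    obtain ⟨m, -, hm⟩ := (Nat.dvd_prime_pow hp).1 this
    refine ⟨⟨m, ?_⟩, hm⟩
    rcases Nat.eq_zero_or_pos m with h | h
    · have := hn i
      simp [hm, h] at this
    · exact h
  choose m hm using this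
  obtain rfl : n = fun i => p ^ (m i : ℕ) := funext hm
  refine ⟨Finset.univ.val.map m, ?_⟩
  obtain ⟨σ, hσ⟩ := exists_reindex _ m (map_toList_get (Finset.univ.val.map m))
  refine ⟨e'.trans ?_⟩
  let q := Finset.univ.val.map m
  have E : (∀ i : Fin q.toList.length, ZMod (p ^ ((q.toList.get i : ℕ+) : ℕ))) ≃+
     (∀ i : Fin q.toList.length, ZMod (p ^ ((m (σ i) : ℕ+) : ℕ))) :=
    AddEquiv.piCongrRight (fun i => (ZMod.ringEquivCongr (by rw [← hσ i])).toAddEquiv)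
  have E2 : (∀ i : Fin q.toList.length, ZMod (p ^ ((m (σ i) : ℕ+) : ℕ))) ≃+
    (∀ i, ZMod (p ^ (m i : ℕ))) := 
    { Equiv.piCongrLeft (fun i => ZMod (p ^ (m i : ℕ))) σ with
      map_add' := fun x y => by
        ext i
        obtain ⟨j, rfl⟩ := σ.surjective i
        simp [Equiv.piCongrLeft_apply_apply] }
  exact (E.trans E2).symm

theorem CLGroup_card_tors {p : ℕ} (hp : p.Prime) (lam : Multiset ℕ+) (i : ℕ) :
    Nat.card {x : CLGroup p lam // p ^ i • x = 0} = p ^ (lam.map (fun x : ℕ+ => min (x : ℕ) i)).sum := by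
  have E : {x : CLGroup p lam // p ^ i • x = 0} ≃
      ∀ j : Fin lam.toList.length, {x : ZMod (p ^ ((lam.toList.get j : ℕ+) : ℕ)) // p ^ i • x = 0} :=
    (Equiv.subtypeEquivRight (fun x => by
      constructor
      · intro h j; exact congrFun h j
      · intro h; exact funext h)).trans (Equiv.subtypePiEquivPi
        (p := fun (j : Fin lam.toList.length)
          (x : ZMod (p ^ ((lam.toList.get j : ℕ+) : ℕ))) => p ^ i • x = 0))
  have hz : ∀ m : ℕ, Nat.card {x : ZMod (p ^ m) // p ^ i • x = 0} = p ^ (min m i) := by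
    intro m
    have : NeZero (p ^ m) := ⟨pow_ne_zero _ hp.ne_zero⟩
    have := IsAddCyclic.card_nsmulAddMonoidHom_ker (ZMod (p ^ m)) (p ^ i)
    rw [Nat.card_zmod] at this
    have hg : (p ^ m).gcd (p ^ i) = p ^ (min m i) := by
      rcases le_total m i with h | h
      · rw [min_eq_left h, Nat.gcd_eq_left (pow_dvd_pow p h)]
      · rw [min_eq_right h, Nat.gcd_eq_right (pow_dvd_pow p h)]
    rw [← hg, ← this]
    rfl
  rw [Nat.card_congr E, Nat.card_pi]
  simp only [hz]
  rw [Finset.prod_pow_eq_pow_sum]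
  congr 1
  conv_rhs => rw [← map_toList_get lam, Multiset.map_map]
  rfl

theorem count_formula (lam : Multiset ℕ+) (a : ℕ+) :
    2 * (lam.map (fun x : ℕ+ => min (x : ℕ) a)).sum = (lam.map (fun x : ℕ+ => min (x : ℕ) (a - 1 : ℕ))).sum
      + (lam.map (fun x : ℕ+ => min (x : ℕ) (a + 1))).sum + lam.count a := by
  induction lam using Multiset.induction_on with
  | empty => simp
  | cons x s ih =>
    simp only [Multiset.map_cons, Multiset.sum_cons, Multiset.count_cons]
    have h1 := a.pos
    have h2 := x.pos
    split_ifs with h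
    · subst h; omega
    · have : (a : ℕ) ≠ x := fun h' => h (PNat.coe_injective h')
      omega

theorem CLGroup_unique {p : ℕ} (hp : p.Prime) (l m : Multiset ℕ+) (e : CLGroup p l ≃+ CLGroup p m) :
    l = m := by
  have h : ∀ i, (l.map (fun x : ℕ+ => min (x : ℕ) i)).sum = (m.map (fun x : ℕ+ => min (x : ℕ) i)).sum := by
    intro i
    apply Nat.pow_right_injective hp.two_le
    simp only
    rw [← CLGroup_card_tors hp, ← CLGroup_card_tors hp]
    refine Nat.card_congr (e.toEquiv.subtypeEquiv fun x => ?_)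
    change _ ↔ p ^ i • e x = 0
    rw [← map_nsmul, EmbeddingLike.map_eq_zero_iff]
  ext a
  have h1 := count_formula l a
  have h2 := count_formula m a
  rw [h, h, h] at h1
  omega

theorem CLGroup_card {p : ℕ} (lam : Multiset ℕ+) :
    ∃ n, Nat.card (CLGroup p lam) = p ^ n := by
  refine ⟨∑ i : Fin lam.toList.length, (lam.toList.get i : ℕ), ?_⟩
  unfold CLGroup
  rw [Nat.card_pi]
  simp [Finset.prod_pow_eq_pow_sum]

theorem CLGroup_finite {p : ℕ} (hp : p.Prime) (lam : Multiset ℕ+) : Finite (CLGroup p lam) := by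
  obtain ⟨n, hn⟩ := CLGroup_card (p := p) lam
  exact Nat.finite_of_card_ne_zero (by rw [hn]; exact pow_ne_zero _ hp.ne_zero)

abbrev QSub (F G : Type*) [AddCommGroup F] [AddCommGroup G] :=
  {L : AddSubgroup F // Nonempty (F ⧸ L ≃+ G)}

theorem sur_bij (F G : Type*) [AddCommGroup F] [AddCommGroup G] :
    Function.Bijective (fun x : (Σ L : QSub F G, (F ⧸ L.1 ≃+ G)) =>
      (⟨x.2.toAddMonoidHom.comp (QuotientAddGroup.mk' x.1.1),
        x.2.surjective.comp (QuotientAddGroup.mk'_surjective _)⟩ :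
          {f : F →+ G // Function.Surjective f})) := by
  constructor
  · rintro ⟨⟨L, hL⟩, e⟩ ⟨⟨L', hL'⟩, e'⟩ h
    have h : e.toAddMonoidHom.comp (QuotientAddGroup.mk' L) =
      e'.toAddMonoidHom.comp (QuotientAddGroup.mk' L') := congrArg Subtype.val h
    have h2 : ∀ x : F, e (x : F ⧸ L) = e' (x : F ⧸ L') := fun x => DFunLike.congr_fun h x
    have e1 : L = L' := by
      ext x
      rw [← QuotientAddGroup.eq_zero_iff, ← QuotientAddGroup.eq_zero_iff,
        ← EmbeddingLike.map_eq_zero_iff (f := e), h2, EmbeddingLike.map_eq_zero_iff]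
    subst e1
    have : e = e' := by
      ext y
      obtain ⟨x, rfl⟩ := QuotientAddGroup.mk_surjective y
      exact h2 x
    subst this
    rfl
  · rintro ⟨f, hf⟩
    let e := QuotientAddGroup.quotientKerEquivOfSurjective f hf
    refine ⟨⟨⟨f.ker, ⟨e⟩⟩, e⟩, ?_⟩
    apply Subtype.ext
    ext x
    rfl

theorem numSur_eq (F G : Type*) [AddCommGroup F] [AddCommGroup G] :
    numSur F G = Nat.card (QSub F G) * numAut G := by
  have E := Equiv.ofBijective _ (sur_bij F G)
  have E2 : (Σ L : QSub F G, (F ⧸ L.1 ≃+ G)) ≃ QSub F G × (G ≃+ G) :=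
    (Equiv.sigmaCongrRight (fun L : QSub F G =>
      ({ toFun := fun e => L.2.some.symm.trans e
         invFun := fun e => L.2.some.trans e
         left_inv := fun e => by ext; simp
         right_inv := fun e => by ext; simp } : (F ⧸ L.1 ≃+ G) ≃ (G ≃+ G)))).trans
    (Equiv.sigmaEquivProd _ _)
  unfold numSur numAut
  rw [← Nat.card_prod, ← Nat.card_congr E2, Nat.card_congr E]

noncomputable def homEquiv (k : ℕ) (G : Type*) [AddCommGroup G] : ((Fin k → ℤ) →+ G) ≃ (Fin k → G) :=
  (addMonoidHomLequivInt ℤ (A := (Fin k → ℤ)) (B := G)).toEquiv.trans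
    ((Pi.basisFun ℤ (Fin k)).constr ℤ).symm.toEquiv

theorem homEquiv_apply (k : ℕ) (G : Type*) [AddCommGroup G] (f : (Fin k → ℤ) →+ G) (i : Fin k) :
    homEquiv k G f i = f (Pi.single i 1) := by
  simp [homEquiv, Module.Basis.constr]

theorem numSur_le (k : ℕ) (G : Type*) [AddCommGroup G] [Finite G] :
    numSur (Fin k → ℤ) G ≤ Nat.card G ^ k := by
  have := Finite.of_equiv _ (homEquiv k G).symm
  calc _ ≤ Nat.card ((Fin k → ℤ) →+ G) := Nat.card_le_card_of_injective _ Subtype.val_injective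
    _ = _ := by rw [Nat.card_congr (homEquiv k G), Nat.card_fun]; simp

theorem le_numSur (k : ℕ) (G : Type*) [AddCommGroup G] [Finite G] :
    Nat.card G ^ k ≤ numSur (Fin k → ℤ) G + Nat.card G * (Nat.card G - 1) ^ k := by
  have := Finite.of_equiv _ (homEquiv k G).symm
  have := Fintype.ofFinite G
  have := Fintype.ofFinite ((Fin k → ℤ) →+ G)
  let T : {f : (Fin k → ℤ) →+ G // Function.Surjective f} ⊕ (Σ g : G, (Fin k → {x : G // x ≠ g})) →
      (Fin k → G) := Sum.elim (fun f => homEquiv k G f.1) (fun x i => (x.2 i).1)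
  have hT : Function.Surjective T := by
    intro v
    by_cases h : Function.Surjective v
    · refine ⟨Sum.inl ⟨(homEquiv k G).symm v, fun g => ?_⟩, ?_⟩
      · obtain ⟨i, hi⟩ := h g
        refine ⟨Pi.single i 1, ?_⟩
        rw [← homEquiv_apply, Equiv.apply_symm_apply, hi]
      · simp [T]
    · simp only [Function.Surjective, not_forall, not_exists] at h
      obtain ⟨g, hg⟩ := h
      exact ⟨Sum.inr ⟨g, fun i => ⟨v i, hg i⟩⟩, rfl⟩
  have := Nat.card_le_card_of_surjective T hT
  rw [Nat.card_sum, Nat.card_fun, Nat.card_sigma] at this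
  simpa [numSur, Nat.card_eq_fintype_card, Fintype.card_subtype_compl] using this

theorem psub_bij {p : ℕ} (hp : p.Prime) (F : Type*) [AddCommGroup F] :
    Function.Bijective (fun x : (Σ lam : Multiset ℕ+, QSub F (CLGroup p lam)) =>
      (⟨x.2.1, by
        obtain ⟨n, hn⟩ := CLGroup_card (p := p) x.1
        exact ⟨n, by rw [← hn]; exact Nat.card_congr x.2.2.some.toEquiv⟩⟩ : PSub p F)) := by
  constructor
  · rintro ⟨l, L, ⟨e⟩⟩ ⟨l', L', ⟨e'⟩⟩ h
    have h : L = L' := congrArg Subtype.val h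
    subst h
    have := CLGroup_unique hp l l' (e.symm.trans e')
    subst this
    rfl
  · rintro ⟨L, n, hn⟩
    have : L.FiniteIndex := ⟨by rw [hn]; exact pow_ne_zero _ hp.ne_zero⟩
    have : Finite (F ⧸ L) := AddSubgroup.finite_quotient_of_finiteIndex
    obtain ⟨l, hl⟩ := CLGroup_exists hp (F ⧸ L) hn
    exact ⟨⟨l, L, hl⟩, rfl⟩

theorem numAut_pos (G : Type*) [AddCommGroup G] [Finite G] : numAut G ≠ 0 := by
  unfold numAut
  have : Finite (G ≃+ G) := Finite.of_injective (fun e => (e : G → G)) DFunLike.coe_injective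
  exact Nat.card_pos.ne'

theorem qsub_finite (k : ℕ) (G : Type*) [AddCommGroup G] [Finite G] :
    Finite (QSub (Fin k → ℤ) G) := by
  have := Finite.of_equiv _ (homEquiv k G).symm
  have := Finite.of_equiv _ (Equiv.ofBijective _ (sur_bij (Fin k → ℤ) G)).symm
  exact Finite.of_injective (fun L : QSub (Fin k → ℤ) G => 
    (⟨L, L.2.some⟩ : (Σ L : QSub (Fin k → ℤ) G, ((Fin k → ℤ) ⧸ L.1 ≃+ G))))
    fun a b h => congrArg Sigma.fst h

/-- weight -/
noncomputable def wt (p : ℕ) (lam : Multiset ℕ+) : ℝ≥0∞ :=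
  ((numAut (CLGroup p lam) : ℝ≥0∞))⁻¹ * (Nat.card (CLGroup p lam) : ℝ≥0∞)⁻¹

noncomputable def surRatio (p k : ℕ) (lam : Multiset ℕ+) : ℝ≥0∞ :=
  (numSur (Fin k → ℤ) (CLGroup p lam) : ℝ≥0∞) / (Nat.card (CLGroup p lam) : ℝ≥0∞) ^ k

theorem sum_surRatio {p : ℕ} (hp : p.Prime) (k : ℕ) :
    ∑' lam, surRatio p k lam * wt p lam = pzeta p (Fin k → ℤ) (1 + k) := by
  unfold pzeta
  rw [← (Equiv.ofBijective _ (psub_bij hp (Fin k → ℤ))).tsum_eq, ENNReal.tsum_sigma']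
  congr 1 with lam
  have hf := CLGroup_finite hp lam
  have : Finite (QSub (Fin k → ℤ) (CLGroup p lam)) := qsub_finite k _
  have := Fintype.ofFinite (QSub (Fin k → ℤ) (CLGroup p lam))
  have hi : ∀ L : QSub (Fin k → ℤ) (CLGroup p lam),
      ((Equiv.ofBijective _ (psub_bij hp (Fin k → ℤ))) ⟨lam, L⟩).1.index = Nat.card (CLGroup p lam) :=
    fun L => Nat.card_congr L.2.some.toEquiv
  simp only [hi]
  rw [tsum_fintype, Finset.sum_const, Finset.card_univ, ← Nat.card_eq_fintype_card, nsmul_eq_mul]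
  unfold surRatio wt
  rw [numSur_eq]
  have h1 : (numAut (CLGroup p lam) : ℝ≥0∞) ≠ 0 := by exact_mod_cast numAut_pos _
  push_cast
  rw [div_eq_mul_inv, pow_add, pow_one, ← ENNReal.inv_pow]
  have h2 := ENNReal.mul_inv_cancel h1 (by simp)
  calc _ = (Nat.card (QSub (Fin k → ℤ) (CLGroup p lam)) : ℝ≥0∞) * ((numAut (CLGroup p lam) : ℝ≥0∞) * (numAut (CLGroup p lam) : ℝ≥0∞)⁻¹) * ((Nat.card (CLGroup p lam) : ℝ≥0∞)⁻¹ * ((Nat.card (CLGroup p lam) : ℝ≥0∞) ^ k)⁻¹) := by ring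
    _ = _ := by rw [h2, mul_one]

theorem surRatio_le_one {p : ℕ} (hp : p.Prime) (k : ℕ) (lam : Multiset ℕ+) :
    surRatio p k lam ≤ 1 := by
  have hf := CLGroup_finite hp lam
  refine ENNReal.div_le_of_le_mul ?_
  rw [one_mul]
  exact_mod_cast numSur_le k (CLGroup p lam)

theorem surRatio_tendsto {p : ℕ} (hp : p.Prime) (lam : Multiset ℕ+) :
    Filter.Tendsto (fun k => surRatio p k lam) Filter.atTop (nhds 1) := by
  have hf := CLGroup_finite hp lam
  set n := Nat.card (CLGroup p lam) with hn
  have hpos : 0 < n := Nat.card_pos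
  have hr : Filter.Tendsto (fun k => (numSur (Fin k → ℤ) (CLGroup p lam) : ℝ) / (n : ℝ) ^ k)
      Filter.atTop (nhds 1) := by
    have h0 : (0 : ℝ) < n := by exact_mod_cast hpos
    have ht : Filter.Tendsto (fun k : ℕ => 1 - (n : ℝ) * (((n : ℝ) - 1) / n) ^ k)
        Filter.atTop (nhds 1) := by
      have := tendsto_pow_atTop_nhds_zero_of_lt_one (r := ((n : ℝ) - 1) / n)
        (div_nonneg (by rw [sub_nonneg]; exact_mod_cast hpos) h0.le)
        (by rw [div_lt_one h0]; linarith)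
      simpa using (this.const_mul (n : ℝ)).const_sub 1
    refine tendsto_of_tendsto_of_tendsto_of_le_of_le ht tendsto_const_nhds (fun k => ?_) (fun k => ?_)
    · have := le_numSur k (CLGroup p lam)
      rw [← hn] at this
      have h2 : (n : ℝ) ^ k ≤ numSur (Fin k → ℤ) (CLGroup p lam) + n * ((n : ℝ) - 1) ^ k := by
        have h3 : ((n - 1 : ℕ) : ℝ) = (n : ℝ) - 1 := by rw [Nat.cast_sub hpos]; simp
        rw [← h3]
        exact_mod_cast this
      simp only
      rw [le_div_iff₀ (by positivity), div_pow, sub_mul, mul_assoc, div_mul_cancel₀ _ (by positivity)]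
      linarith
    · simp only
      rw [div_le_one (by positivity)]
      exact_mod_cast numSur_le k (CLGroup p lam)
  have := ENNReal.tendsto_ofReal hr
  rw [ENNReal.ofReal_one] at this
  refine this.congr fun k => ?_
  rw [ENNReal.ofReal_div_of_pos (by positivity), ENNReal.ofReal_pow (by positivity)]
  simp [surRatio, hn]

theorem tsum_wt_tendsto {p : ℕ} (hp : p.Prime) :
    Filter.Tendsto (fun k => ∑' lam, surRatio p k lam * wt p lam) Filter.atTop
      (nhds (∑' lam, wt p lam)) := by
  letI : MeasurableSpace (Multiset ℕ+) := ⊤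
  refine tendsto_of_le_liminf_of_limsup_le ?_ ?_
  · have := MeasureTheory.lintegral_liminf_le (μ := MeasureTheory.Measure.count)
      (u := Filter.atTop) (f := fun k lam => surRatio p k lam * wt p lam) (fun k => measurable_from_top)
    simp only [MeasureTheory.lintegral_count] at this
    refine le_trans (le_of_eq ?_) this
    congr 1 with lam
    have h := ENNReal.Tendsto.mul_const (b := wt p lam) (surRatio_tendsto hp lam) (Or.inl one_ne_zero)
    rw [h.liminf_eq, one_mul]
  · refine Filter.limsup_le_of_le (by isBoundedDefault) (Filter.Eventually.of_forall fun k => ?_)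
    refine ENNReal.tsum_le_tsum fun lam => ?_
    exact mul_le_of_le_one_left' (surRatio_le_one hp k lam)

/-- The sum over isomorphism classes of finite abelian `p`-groups `A` of `μ^0(A)/|A|` equals
`1 - 1/p`: under the pointed Cohen–Lenstra measure, the probability that the marked element
is the identity is `1 - p⁻¹`. -/
theorem cl_pointed_identity_prob (p : ℕ) (hp : p.Prime) (hodd : Odd p) :
    ∑' lam : Multiset ℕ+,
      clMeasure p 0 (CLGroup p lam) / (Nat.card (CLGroup p lam) : ℝ)
      = 1 - (p : ℝ)⁻¹ := by
  have hp1 : (1 : ℝ) < p := by exact_mod_cast hp.one_lt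
  have hq0 : (0 : ℝ) < (p : ℝ)⁻¹ := by positivity
  have hq1 : (p : ℝ)⁻¹ < 1 := inv_lt_one_of_one_lt₀ hp1
  set q : ℝ := (p : ℝ)⁻¹ with hq
  have hfac : ∀ j : ℕ, 0 < 1 - q ^ (j + 1) := fun j => by
    have := pow_lt_one₀ hq0.le hq1 (Nat.succ_ne_zero j)
    exact sub_pos.2 this
  have hprod : clProd p 0 = ∏' k : ℕ, (1 + - q ^ (k + 1)) := by
    unfold clProd
    congr 1 with k
    rw [hq, ← sub_eq_add_neg, inv_pow, ← zpow_natCast, ← zpow_neg]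
    push_cast
    simp
  have hsum : Summable fun k : ℕ => ‖-q ^ (k + 1)‖ := by
    simp only [norm_neg, norm_pow, Real.norm_eq_abs, abs_of_pos hq0]
    exact (summable_nat_add_iff 1).2 (summable_geometric_of_lt_one hq0.le hq1)
  have hne : clProd p 0 ≠ 0 := by
    rw [hprod]
    refine tprod_one_add_ne_zero_of_summable (fun k => ?_) hsum
    have := hfac k
    rw [← sub_eq_add_neg]; exact this.ne'
  have hlim : Filter.Tendsto (fun k => ∏ j ∈ Finset.range (k + 1), (1 - q ^ (j + 1))) Filter.atTop
      (nhds (clProd p 0)) := by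
    rw [hprod]
    have := (multipliable_one_add_of_summable hsum).hasProd.tendsto_prod_nat
    simp only [← sub_eq_add_neg] at this ⊢
    exact (Filter.tendsto_add_atTop_iff_nat 1).2 this
  -- partial sums
  have hP : ∀ k, ∑' lam, surRatio p k lam * wt p lam =
      ENNReal.ofReal ((1 - q) / ∏ j ∈ Finset.range (k + 1), (1 - q ^ (j + 1))) := by
    intro k
    rw [sum_surRatio hp, pzeta_eq hp, Finset.prod_range_succ', zero_add, pow_one,
      div_mul_cancel_right₀ (by linarith), ← Finset.prod_inv_distrib,
      ENNReal.ofReal_prod_of_nonneg (fun j _ => (inv_pos.2 (hfac (j + 1))).le)]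
    refine Finset.prod_congr rfl fun j _ => ?_
    rw [ENNReal.ofReal_inv_of_pos (hfac (j + 1)), ENNReal.ofReal_sub _ (by positivity),
      ENNReal.ofReal_one, ENNReal.ofReal_pow hq0.le, hq, ENNReal.ofReal_inv_of_pos (by linarith),
      ENNReal.ofReal_natCast, add_comm 1 j]
  have hT := tsum_wt_tendsto hp
  simp only [hP] at hT
  have hT2 := ENNReal.tendsto_ofReal ((tendsto_const_nhds (x := 1 - q)).div hlim hne)
  have hval := tendsto_nhds_unique hT hT2
  have hnn : 0 ≤ clProd p 0 := ge_of_tendsto' hlim fun k =>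
    Finset.prod_nonneg fun j _ => (hfac j).le
  have hreal : ∑' lam, (wt p lam).toReal = (1 - q) / clProd p 0 := by
    rw [← ENNReal.tsum_toReal_eq, hval, ENNReal.toReal_ofReal (div_nonneg (by linarith) hnn)]
    intro lam
    refine ne_top_of_le_ne_top (b := ∑' lam, wt p lam) (by rw [hval]; simp) (ENNReal.le_tsum lam)
  have : ∀ lam, clMeasure p 0 (CLGroup p lam) / (Nat.card (CLGroup p lam) : ℝ) =
      clProd p 0 * (wt p lam).toReal := by
    intro lam
    simp only [clMeasure, wt, ENNReal.toReal_mul, ENNReal.toReal_inv, ENNReal.toReal_natCast]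
    rw [pow_zero, inv_one, one_mul, div_eq_mul_inv]
    ring
  simp only [this]
  rw [tsum_mul_left, hreal, mul_div_cancel₀ _ hne]
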